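/- Assume the sub-critical range q > 1 and (2/3)q + 1 < p < q + 2/3, and let M < ∞. There is a constant C(M,p,q) > 0 such that every injective, arc-length parametrized curve γ ∈ C¹(ℝ/ℤ,ℝⁿ) with E_{p,q}(γ) ≤ M satisfies the bi-Lipschitz estimate d_{ℝ/ℤ}(u,v) ≤ C(M,p,q) |γ(u) − γ(v)| for all u, v ∈ ℝ/ℤ. -/

import Mathlib

open MeasureTheory Set Filter Topology
open scoped ENNReal

noncomputable section

/-- The area `|a ∧ b|` of the parallelogram spanned by `a, b ∈ ℝⁿ`. -/
def wedgeNorm {n : ℕ} (a b : EuclideanSpace ℝ (Fin n)) : ℝ :=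
  Real.sqrt (‖a‖ ^ 2 * ‖b‖ ^ 2 - (inner ℝ a b : ℝ) ^ 2)

/-- `1 / R^{p,q}(x,y,z) = |(y-x) ∧ (z-x)|^q / (|y-z| |y-x| |z-x|)^p`. -/
def invR {n : ℕ} (p q : ℝ) (x y z : EuclideanSpace ℝ (Fin n)) : ℝ :=
  wedgeNorm (y - x) (z - x) ^ q / (‖y - z‖ * ‖y - x‖ * ‖z - x‖) ^ p

/-- The generalized integral Menger curvature `E_{p,q}` of a closed curve,
modelled by a `1`-periodic function together with its derivative,
the parameter domain `ℝ/ℤ` being represented by `[0,1)`; values in `[0,∞]`. -/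
def menger {n : ℕ} (p q : ℝ) (γ γ' : ℝ → EuclideanSpace ℝ (Fin n)) : ℝ≥0∞ :=
  ∫⁻ u₁ in Ico (0:ℝ) 1, ∫⁻ u₂ in Ico (0:ℝ) 1, ∫⁻ u₃ in Ico (0:ℝ) 1,
    ENNReal.ofReal (‖γ' u₁‖ * ‖γ' u₂‖ * ‖γ' u₃‖ * invR p q (γ u₁) (γ u₂) (γ u₃))

/-- Injectivity of a `1`-periodic curve as a map on `ℝ/ℤ`. -/
def InjCircle {n : ℕ} (γ : ℝ → EuclideanSpace ℝ (Fin n)) : Prop :=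
  ∀ u v : ℝ, γ u = γ v → ∃ k : ℤ, v = u + k

/-- Distance on `ℝ/ℤ`. -/
def circleDist (u v : ℝ) : ℝ := ⨅ k : ℤ, |u - v - (k : ℝ)|

/-- The `ρ`-th power of the Sobolev–Slobodeckiĭ seminorm `[f]_{W^{1+s,ρ}}`
of a periodic function with derivative `f'`; values in `[0,∞]`. -/
def sobSemiPow {n : ℕ} (s ρ : ℝ) (f' : ℝ → EuclideanSpace ℝ (Fin n)) : ℝ≥0∞ :=
  ∫⁻ u in Ico (0:ℝ) 1, ∫⁻ w in Icc (-(1/2) : ℝ) (1/2),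
    ENNReal.ofReal (‖f' (u + w) - f' u‖ ^ ρ / |w| ^ (1 + ρ * s))

/-- The norm `‖f‖_{W^{1+s,ρ}} = ‖f‖_{W^{1,ρ}} + [f]_{W^{1+s,ρ}}`. -/
def sobNorm {n : ℕ} (s ρ : ℝ) (f f' : ℝ → EuclideanSpace ℝ (Fin n)) : ℝ :=
  (∫ u in Ico (0:ℝ) 1, ‖f u‖ ^ ρ) ^ (1/ρ) + (∫ u in Ico (0:ℝ) 1, ‖f' u‖ ^ ρ) ^ (1/ρ)
    + (sobSemiPow s ρ f').toReal ^ (1/ρ)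

/-- `γ` is a closed `W^{1,1}` curve with weak derivative `γ'`:
both are `1`-periodic, `γ'` is measurable and `γ` is the primitive of `γ'`. -/
structure CurvePair {n : ℕ} (γ γ' : ℝ → EuclideanSpace ℝ (Fin n)) : Prop where
  periodic : Function.Periodic γ 1
  periodic' : Function.Periodic γ' 1
  meas' : Measurable γ'
  primitive : ∀ u, γ u = γ 0 + ∫ t in (0:ℝ)..u, γ' t

/-!
Every point of the curve has a parameter interval of length `δ` whose image stays within `δ` of it.
For an inscribed triangle with sides at most `r` and parallelogram area `W`, taking `δ` proportional
to `W / r` makes all triangles near it comparable, so `E_{p,q}(γ) ≤ M` forces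
`W ^ (q + 3) ≲ M * r ^ (3 * p + 3)`, i.e. `W ≲ r ^ (2 + κ)`, and `κ > 0` exactly when
`p > 2 / 3 * q + 1`. By this gain, bisecting a chord over a parameter interval of length `h` loses
only a proportion `O(h ^ (2 * κ))` of its length; the losses are summable over the dyadic scales, so
the almost straightness that a `C¹` curve has at some non-uniform tiny scale propagates to a
uniform scale `ρ`. Finally, a closest pair of points at parameter distance at least `ρ`, if at
distance `d < ρ / 4`, would span with a nearby point of the curve a triangle of size `d` and area
comparable to `d ^ 2`, which flatness excludes.
-/

section Periodic

lemma periodic_map_sub_intCast {α : Type*} {f : ℝ → α} (hf : Function.Periodic f 1) (x : ℝ)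
    (k : ℤ) : f (x - k) = f x := by
  simpa only [zsmul_one] using hf.sub_zsmul_eq k

lemma periodic_deriv {E : Type*} [NormedAddCommGroup E] [NormedSpace ℝ E] {f : ℝ → E} {c : ℝ}
    (hf : Function.Periodic f c) : Function.Periodic (deriv f) c := by
  intro x
  rw [← deriv_comp_add_const, funext hf]

lemma uniformContinuous_of_continuous_of_periodic {α : Type*} [UniformSpace α] {f : ℝ → α}
    (hf : Continuous f) (hper : Function.Periodic f 1) : UniformContinuous f := by
  have hlift : Continuous (hper.lift : UnitAddCircle → α) := continuous_coinduced_dom.mpr hf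
  have hmk : UniformContinuous (QuotientAddGroup.mk' (AddSubgroup.zmultiples (1 : ℝ))) :=
    uniformContinuous_addMonoidHom_of_continuous continuous_quotient_mk'
  exact (CompactSpace.uniformContinuous_of_continuous hlift).comp hmk

end Periodic

section CircleDist

lemma circleDist_le_abs_sub_sub_intCast (u v : ℝ) (k : ℤ) : circleDist u v ≤ |u - v - k| :=
  ciInf_le ⟨0, by rintro _ ⟨m, rfl⟩; exact abs_nonneg _⟩ k

lemma exists_intCast_circleDist_le (u v : ℝ) :
    ∃ k : ℤ, u - k - v ∈ Ico 0 1 ∧ circleDist u v ≤ u - k - v ∧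
      circleDist u v ≤ 1 - (u - k - v) := by
  have hfract : u - ⌊u - v⌋ - v = Int.fract (u - v) := by rw [sub_right_comm, Int.fract]
  refine ⟨⌊u - v⌋, ?_⟩
  rw [hfract]
  refine ⟨⟨Int.fract_nonneg _, Int.fract_lt_one _⟩, ?_, ?_⟩
  · have h := circleDist_le_abs_sub_sub_intCast u v ⌊u - v⌋
    rwa [Int.self_sub_floor, Int.abs_fract] at h
  · have h := circleDist_le_abs_sub_sub_intCast u v (⌊u - v⌋ + 1)
    rwa [Int.cast_add, Int.cast_one, ← sub_sub, Int.self_sub_floor, abs_sub_comm,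
      Int.abs_one_sub_fract] at h

end CircleDist

section Parallelogram

variable {E : Type*} [NormedAddCommGroup E] [InnerProductSpace ℝ E]

lemma norm_add_le_of_le_norm_sub {a a' : E} {d : ℝ} (hd : 0 ≤ d) (ha : ‖a‖ ≤ d) (ha' : ‖a'‖ ≤ d)
    (haa' : 7 / 4 * d ≤ ‖a - a'‖) : ‖a + a'‖ ≤ d := by
  have hpar := parallelogram_law_with_norm ℝ a a'
  nlinarith [norm_nonneg a, norm_nonneg a', norm_nonneg (a + a')]

lemma real_inner_le_of_le_norm_sub {a b : E} {d : ℝ} (hd : 0 ≤ d) (ha : ‖a‖ ≤ d) (hb : ‖b‖ ≤ d)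
    (hab : d ≤ ‖a - b‖) : inner ℝ a b ≤ d ^ 2 / 2 := by
  have hsq := norm_sub_sq_real a b
  nlinarith [norm_nonneg a, norm_nonneg b]

lemma real_inner_nonneg_of_le_norm_add {a b : E} {h : ℝ} (hh : 0 ≤ h) (ha : ‖a‖ ≤ h / 2)
    (hb : ‖b‖ ≤ h / 2) (hab : 3 / 4 * h ≤ ‖a + b‖) : 0 ≤ inner ℝ a b := by
  have hsq := norm_add_sq_real a b
  nlinarith [norm_nonneg a, norm_nonneg b, norm_nonneg (a + b)]

end Parallelogram

section Wedge

variable {n : ℕ}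

lemma wedgeNorm_nonneg (a b : EuclideanSpace ℝ (Fin n)) : 0 ≤ wedgeNorm a b :=
  Real.sqrt_nonneg _

lemma wedgeNorm_sq (a b : EuclideanSpace ℝ (Fin n)) :
    wedgeNorm a b ^ 2 = ‖a‖ ^ 2 * ‖b‖ ^ 2 - inner ℝ a b ^ 2 := by
  rw [wedgeNorm, Real.sq_sqrt]
  rw [sub_nonneg, ← mul_pow]
  exact sq_le_sq.mpr ((abs_real_inner_le_norm a b).trans (le_abs_self _))

lemma wedgeNorm_comm (a b : EuclideanSpace ℝ (Fin n)) : wedgeNorm a b = wedgeNorm b a := by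
  rw [wedgeNorm, wedgeNorm, real_inner_comm, mul_comm]

lemma wedgeNorm_neg_left (a b : EuclideanSpace ℝ (Fin n)) :
    wedgeNorm (-a) b = wedgeNorm a b := by
  rw [wedgeNorm, wedgeNorm, norm_neg, inner_neg_left, neg_sq]

lemma wedgeNorm_self (a : EuclideanSpace ℝ (Fin n)) : wedgeNorm a a = 0 := by
  rw [wedgeNorm, real_inner_self_eq_norm_sq, ← sq, sub_self, Real.sqrt_zero]

lemma wedgeNorm_zero_right (a : EuclideanSpace ℝ (Fin n)) : wedgeNorm a 0 = 0 := by
  simp [wedgeNorm]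

lemma wedgeNorm_le_norm_mul_norm (a b : EuclideanSpace ℝ (Fin n)) :
    wedgeNorm a b ≤ ‖a‖ * ‖b‖ := by
  refine le_of_sq_le_sq ?_ (by positivity)
  rw [wedgeNorm_sq, mul_pow]
  exact sub_le_self _ (sq_nonneg _)

lemma norm_mul_wedgeNorm (a b : EuclideanSpace ℝ (Fin n)) :
    ‖b‖ * wedgeNorm a b = ‖‖b‖ ^ 2 • a - inner ℝ a b • b‖ := by
  rw [← sq_eq_sq₀ (mul_nonneg (norm_nonneg _) (wedgeNorm_nonneg _ _)) (norm_nonneg _),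
    mul_pow, wedgeNorm_sq, norm_sub_sq_real, norm_smul, norm_smul, real_inner_smul_left,
    real_inner_smul_right]
  simp only [Real.norm_eq_abs, mul_pow, sq_abs]
  ring

lemma wedgeNorm_add_left_le (a c b : EuclideanSpace ℝ (Fin n)) :
    wedgeNorm (a + c) b ≤ wedgeNorm a b + wedgeNorm c b := by
  rcases eq_or_ne b 0 with rfl | hb
  · simp only [wedgeNorm_zero_right, add_zero, le_refl]
  refine le_of_mul_le_mul_left ?_ (norm_pos_iff.mpr hb)
  rw [mul_add, norm_mul_wedgeNorm, norm_mul_wedgeNorm, norm_mul_wedgeNorm, inner_add_left]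
  refine le_of_eq_of_le ?_ (norm_add_le _ _)
  congr 1
  module

lemma wedgeNorm_le_add_norm_sub (a b a' b' : EuclideanSpace ℝ (Fin n)) :
    wedgeNorm a b ≤ wedgeNorm a' b' + ‖a - a'‖ * ‖b‖ + ‖a'‖ * ‖b - b'‖ := by
  have hleft : wedgeNorm a b ≤ wedgeNorm a' b + wedgeNorm (a - a') b := by
    simpa only [add_sub_cancel] using wedgeNorm_add_left_le a' (a - a') b
  have hright : wedgeNorm a' b ≤ wedgeNorm a' b' + wedgeNorm a' (b - b') := by
    simpa only [add_sub_cancel, wedgeNorm_comm _ a'] using wedgeNorm_add_left_le b' (b - b') a'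
  linarith [wedgeNorm_le_norm_mul_norm (a - a') b, wedgeNorm_le_norm_mul_norm a' (b - b')]

lemma triangle_defect_mul_le {a b : EuclideanSpace ℝ (Fin n)} (hab : 0 ≤ inner ℝ a b) :
    (‖a‖ + ‖b‖ - ‖a + b‖) * ((‖a‖ + ‖b‖) * (‖a‖ * ‖b‖)) ≤ 2 * wedgeNorm a b ^ 2 := by
  have hcs := real_inner_le_norm a b
  have hdefect : (‖a‖ + ‖b‖ - ‖a + b‖) * (‖a‖ + ‖b‖) ≤ 2 * (‖a‖ * ‖b‖ - inner ℝ a b) := by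
    nlinarith [norm_add_sq_real a b, norm_add_le a b, norm_nonneg (a + b)]
  calc (‖a‖ + ‖b‖ - ‖a + b‖) * ((‖a‖ + ‖b‖) * (‖a‖ * ‖b‖))
      = (‖a‖ + ‖b‖ - ‖a + b‖) * (‖a‖ + ‖b‖) * (‖a‖ * ‖b‖) := by ring
    _ ≤ 2 * (‖a‖ * ‖b‖ - inner ℝ a b) * (‖a‖ * ‖b‖) := by gcongr
    _ ≤ 2 * (‖a‖ * ‖b‖ - inner ℝ a b) * (‖a‖ * ‖b‖ + inner ℝ a b) := by
      gcongr
      linarith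
    _ = 2 * wedgeNorm a b ^ 2 := by rw [wedgeNorm_sq]; ring

lemma triangle_defect_mul_cube_le {a b : EuclideanSpace ℝ (Fin n)} {h : ℝ} (hh : 0 ≤ h)
    (ha : 7 / 16 * h ≤ ‖a‖) (hb : 7 / 16 * h ≤ ‖b‖) (hab : 0 ≤ inner ℝ a b) :
    (‖a‖ + ‖b‖ - ‖a + b‖) * h ^ 3 ≤ 12 * wedgeNorm a b ^ 2 := by
  have hdefect : 0 ≤ ‖a‖ + ‖b‖ - ‖a + b‖ := sub_nonneg.mpr (norm_add_le a b)
  have hsides : h ^ 3 ≤ 6 * ((‖a‖ + ‖b‖) * (‖a‖ * ‖b‖)) := by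
    calc h ^ 3 ≤ 6 * ((7 / 16 * h + 7 / 16 * h) * (7 / 16 * h * (7 / 16 * h))) := by
          linarith [pow_nonneg hh 3]
      _ ≤ 6 * ((‖a‖ + ‖b‖) * (‖a‖ * ‖b‖)) := by gcongr
  linarith [mul_le_mul_of_nonneg_left hsides hdefect, triangle_defect_mul_le hab]

lemma sq_div_two_lt_wedgeNorm {a b : EuclideanSpace ℝ (Fin n)} {d : ℝ} (hd : 0 < d)
    (ha : 7 / 8 * d ≤ ‖a‖) (hb : ‖b‖ = d) (hab : |inner ℝ a b| ≤ d ^ 2 / 2) :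
    d ^ 2 / 2 < wedgeNorm a b := by
  refine lt_of_pow_lt_pow_left₀ 2 (wedgeNorm_nonneg a b) ?_
  have hinner : inner ℝ a b ^ 2 ≤ (d ^ 2 / 2) ^ 2 := sq_le_sq' (abs_le.mp hab).1 (abs_le.mp hab).2
  have hnorm : (7 / 8 * d) ^ 2 * d ^ 2 ≤ ‖a‖ ^ 2 * d ^ 2 := by gcongr
  rw [wedgeNorm_sq, hb]
  linarith [pow_pos hd 4]

lemma sq_div_two_lt_wedgeNorm_or {a a' b : EuclideanSpace ℝ (Fin n)} {d : ℝ} (hd : 0 < d)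
    (ha : ‖a‖ ∈ Icc (7 / 8 * d) d) (ha' : ‖a'‖ ∈ Icc (7 / 8 * d) d) (hb : ‖b‖ = d)
    (haa' : 7 / 4 * d ≤ ‖a - a'‖) (hab : d ≤ ‖a - b‖) (ha'b : d ≤ ‖a' - b‖) :
    d ^ 2 / 2 < wedgeNorm a b ∨ d ^ 2 / 2 < wedgeNorm a' b := by
  have hle : inner ℝ a b ≤ d ^ 2 / 2 := real_inner_le_of_le_norm_sub hd.le ha.2 hb.le hab
  have hle' : inner ℝ a' b ≤ d ^ 2 / 2 := real_inner_le_of_le_norm_sub hd.le ha'.2 hb.le ha'b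
  have hsum : -d ^ 2 ≤ inner ℝ a b + inner ℝ a' b := by
    have hcs : |inner ℝ (a + a') b| ≤ d * d := by
      refine (abs_real_inner_le_norm _ _).trans ?_
      rw [hb]
      gcongr
      exact norm_add_le_of_le_norm_sub hd.le ha.2 ha'.2 haa'
    rw [← inner_add_left]
    linarith [(abs_le.mp hcs).1]
  rcases le_or_gt (-(d ^ 2 / 2)) (inner ℝ a b) with h | h
  · exact Or.inl (sq_div_two_lt_wedgeNorm hd ha.1 hb (abs_le.mpr ⟨h, hle⟩))
  · exact Or.inr (sq_div_two_lt_wedgeNorm hd ha'.1 hb (abs_le.mpr ⟨by linarith, hle'⟩))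

end Wedge

section Energy

lemma mul_measure_le_setLIntegral {α : Type*} [MeasurableSpace α] {μ : Measure α} {f : α → ℝ≥0∞}
    {c : ℝ≥0∞} {s t : Set α} (hs : MeasurableSet s) (hst : s ⊆ t) (hf : ∀ x ∈ s, c ≤ f x) :
    c * μ s ≤ ∫⁻ x in t, f x ∂μ :=
  calc c * μ s = ∫⁻ _ in s, c ∂μ := (setLIntegral_const s c).symm
    _ ≤ ∫⁻ x in s, f x ∂μ := setLIntegral_mono' hs hf
    _ ≤ ∫⁻ x in t, f x ∂μ := lintegral_mono_set hst

lemma exists_Ico_subset_dist_le {α : Type*} [PseudoMetricSpace α] {γ : ℝ → α}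
    (hγ : LipschitzWith 1 γ) (hper : Function.Periodic γ 1) {δ : ℝ} (hδ₀ : 0 ≤ δ)
    (hδ : δ ≤ 1 / 2) (u : ℝ) :
    ∃ a : ℝ, Ico a (a + δ) ⊆ Ico 0 1 ∧ ∀ t ∈ Ico a (a + δ), dist (γ t) (γ u) ≤ δ := by
  suffices ∃ a : ℝ, Ico a (a + δ) ⊆ Ico 0 1 ∧ Int.fract u ∈ Icc a (a + δ) by
    obtain ⟨a, hsub, hu⟩ := this
    refine ⟨a, hsub, fun t ht => ?_⟩
    rw [← periodic_map_sub_intCast hper u ⌊u⌋, Int.self_sub_floor]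
    refine (hγ.dist_le_mul t (Int.fract u)).trans ?_
    rw [NNReal.coe_one, one_mul, Real.dist_eq, abs_le]
    constructor <;> linarith [ht.1, ht.2, hu.1, hu.2]
  have h₀ := Int.fract_nonneg u
  have h₁ := (Int.fract_lt_one u).le
  rcases le_total (Int.fract u) (1 / 2) with h | h
  · exact ⟨Int.fract u, Ico_subset_Ico h₀ (by linarith), le_rfl, by linarith⟩
  · exact ⟨Int.fract u - δ, Ico_subset_Ico (by linarith) (by linarith), by linarith, by linarith⟩

variable {n : ℕ} {p q : ℝ}

lemma div_le_invR {x y z : EuclideanSpace ℝ (Fin n)} {W r : ℝ} (hp : 0 ≤ p) (hq : 0 ≤ q)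
    (hW : 0 < W) (hxyz : W ≤ wedgeNorm (y - x) (z - x)) (hyx : ‖y - x‖ ≤ r) (hzx : ‖z - x‖ ≤ r) :
    W ^ q / (2 * r ^ 3) ^ p ≤ invR p q x y z := by
  have hyz : ‖y - z‖ ≤ 2 * r := by
    rw [← sub_sub_sub_cancel_right y z x]
    linarith [norm_sub_le (y - x) (z - x)]
  have hyz₀ : 0 < ‖y - z‖ := by
    rw [norm_pos_iff, sub_ne_zero]
    rintro rfl
    exact hW.not_ge (hxyz.trans_eq (wedgeNorm_self _))
  have hside₀ : 0 < ‖y - x‖ * ‖z - x‖ :=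
    hW.trans_le (hxyz.trans (wedgeNorm_le_norm_mul_norm _ _))
  have hprod : ‖y - z‖ * ‖y - x‖ * ‖z - x‖ ≤ 2 * r ^ 3 := by
    have hr : 0 ≤ r := (norm_nonneg _).trans hyx
    calc ‖y - z‖ * ‖y - x‖ * ‖z - x‖ ≤ 2 * r * r * r := by gcongr
      _ = 2 * r ^ 3 := by ring
  have hprod₀ : 0 < ‖y - z‖ * ‖y - x‖ * ‖z - x‖ := by
    rw [mul_assoc]
    positivity
  have hwedge₀ := wedgeNorm_nonneg (y - x) (z - x)
  rw [invR]
  gcongr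

lemma div_le_invR_of_dist_le {x y z x' y' z' : EuclideanSpace ℝ (Fin n)} {r δ : ℝ}
    (hp : 0 ≤ p) (hq : 0 ≤ q) (hW : 0 < wedgeNorm (y - x) (z - x))
    (hyx : ‖y - x‖ ≤ r) (hzx : ‖z - x‖ ≤ r)
    (hδr : 2 * δ ≤ r) (hδ : 12 * r * δ ≤ wedgeNorm (y - x) (z - x))
    (hx : dist x' x ≤ δ) (hy : dist y' y ≤ δ) (hz : dist z' z ≤ δ) :
    (wedgeNorm (y - x) (z - x) / 2) ^ q / (16 * r ^ 3) ^ p ≤ invR p q x' y' z' := by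
  have hside {w w'} (hw : dist w' w ≤ δ) : ‖w - x - (w' - x')‖ ≤ 2 * δ := by
    rw [← dist_eq_norm, dist_comm]
    linarith [dist_sub_sub_le w' x' w x]
  have hside' {w w'} (hwr : ‖w - x‖ ≤ r) (hw : dist w' w ≤ δ) : ‖w' - x'‖ ≤ 2 * r := by
    linarith [norm_le_norm_add_norm_sub (w - x) (w' - x'), hside hw]
  have hwedge : wedgeNorm (y - x) (z - x) / 2 ≤ wedgeNorm (y' - x') (z' - x') := by
    have hpert := wedgeNorm_le_add_norm_sub (y - x) (z - x) (y' - x') (z' - x')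
    have hδ₀ : 0 ≤ δ := dist_nonneg.trans hx
    have hr₀ : 0 ≤ r := (norm_nonneg _).trans hyx
    have hy_err : ‖y - x - (y' - x')‖ * ‖z - x‖ ≤ 2 * δ * r := by
      gcongr
      exact hside hy
    have hz_err : ‖y' - x'‖ * ‖z - x - (z' - x')‖ ≤ 2 * r * (2 * δ) := by
      gcongr
      exacts [hside' hyx hy, hside hz]
    linarith
  rw [show 16 * r ^ 3 = 2 * (2 * r) ^ 3 by ring]
  exact div_le_invR hp hq (by positivity) hwedge (hside' hyx hy) (hside' hzx hz)

lemma ofReal_mul_pow_three_le_menger {γ γ' : ℝ → EuclideanSpace ℝ (Fin n)}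
    (hγ : LipschitzWith 1 γ) (hper : Function.Periodic γ 1) (hγ' : ∀ u, ‖γ' u‖ = 1)
    {u v w c δ : ℝ} (hc : 0 ≤ c) (hδ₀ : 0 ≤ δ) (hδ : δ ≤ 1 / 2)
    (hinvR : ∀ x y z, dist x (γ u) ≤ δ → dist y (γ v) ≤ δ → dist z (γ w) ≤ δ →
      c ≤ invR p q x y z) :
    ENNReal.ofReal (c * δ ^ 3) ≤ menger p q γ γ' := by
  have hpow : ENNReal.ofReal (c * δ ^ 3) =
      ENNReal.ofReal c * ENNReal.ofReal δ * ENNReal.ofReal δ * ENNReal.ofReal δ := by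
    rw [ENNReal.ofReal_mul hc, ENNReal.ofReal_pow hδ₀, pow_three', ← mul_assoc, ← mul_assoc]
  have hvol (a : ℝ) : ENNReal.ofReal δ = volume (Ico a (a + δ)) := by
    rw [Real.volume_Ico, add_sub_cancel_left]
  obtain ⟨a, ha, hau⟩ := exists_Ico_subset_dist_le hγ hper hδ₀ hδ u
  obtain ⟨b, hb, hbv⟩ := exists_Ico_subset_dist_le hγ hper hδ₀ hδ v
  obtain ⟨d, hd, hdw⟩ := exists_Ico_subset_dist_le hγ hper hδ₀ hδ w
  rw [hpow]
  nth_rw 3 [hvol a]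
  nth_rw 2 [hvol b]
  nth_rw 1 [hvol d]
  refine mul_measure_le_setLIntegral measurableSet_Ico ha fun s hs => ?_
  refine mul_measure_le_setLIntegral measurableSet_Ico hb fun t ht => ?_
  refine mul_measure_le_setLIntegral measurableSet_Ico hd fun m hm => ENNReal.ofReal_le_ofReal ?_
  simpa only [hγ', one_mul] using hinvR _ _ _ (hau s hs) (hbv t ht) (hdw m hm)

lemma half_rpow_div_mul_pow_three {W r : ℝ} (hW : 0 < W) (hr : 0 < r) :
    (W / 2) ^ q / (16 * r ^ 3) ^ p * (W / (12 * r)) ^ 3 =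
      W ^ (q + 3) / (12 ^ 3 * 2 ^ q * 16 ^ p * r ^ (3 * p + 3)) := by
  have hr_pow : (r ^ 3) ^ p = r ^ (3 * p) := by
    rw [← Real.rpow_natCast_mul hr.le, Nat.cast_ofNat]
  rw [Real.div_rpow hW.le zero_le_two, Real.mul_rpow (by positivity) (by positivity), hr_pow,
    Real.rpow_add hW, Real.rpow_add hr, Real.rpow_ofNat, Real.rpow_ofNat]
  field_simp

lemma wedgeNorm_rpow_le_of_menger_le (hp : 0 ≤ p) (hq : 0 ≤ q) {M : NNReal}
    {γ γ' : ℝ → EuclideanSpace ℝ (Fin n)} (hγ : LipschitzWith 1 γ)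
    (hper : Function.Periodic γ 1) (hγ' : ∀ u, ‖γ' u‖ = 1) (hE : menger p q γ γ' ≤ M)
    {r : ℝ} (hr : 0 < r) (hr₁ : r ≤ 1) {u v w : ℝ}
    (hv : ‖γ v - γ u‖ ≤ r) (hw : ‖γ w - γ u‖ ≤ r) :
    wedgeNorm (γ v - γ u) (γ w - γ u) ^ (q + 3) ≤
      12 ^ 3 * 2 ^ q * 16 ^ p * M * r ^ (3 * p + 3) := by
  set W := wedgeNorm (γ v - γ u) (γ w - γ u) with hW_def
  rcases (wedgeNorm_nonneg (γ v - γ u) (γ w - γ u)).eq_or_lt with hW | hW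
  · rw [hW_def, ← hW, Real.zero_rpow (by positivity)]
    positivity
  have hWr : W ≤ r * r := (wedgeNorm_le_norm_mul_norm _ _).trans (by gcongr)
  have hδr : W / (12 * r) ≤ r / 12 := by
    rw [div_le_iff₀ (by positivity)]
    linarith
  have hlow := ofReal_mul_pow_three_le_menger (p := p) (q := q) hγ hper hγ'
    (c := (W / 2) ^ q / (16 * r ^ 3) ^ p) (δ := W / (12 * r)) (by positivity) (by positivity)
    (by linarith) fun x y z => div_le_invR_of_dist_le hp hq hW hv hw (by linarith)
      (mul_div_cancel₀ W (by positivity)).le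
  rw [half_rpow_div_mul_pow_three hW hr] at hlow
  have hM := ENNReal.ofReal_le_coe.mp (hlow.trans hE)
  rw [div_le_iff₀ (by positivity)] at hM
  linarith

/-- Quantitative flatness of a curve: a triangle inscribed in its image, both of whose sides at
one vertex have length at most `r ≤ 1`, spans a parallelogram of area at most `K * r ^ κ * r ^ 2`,
which improves the trivial bound `r ^ 2` at small scales. -/
def UniformlyFlat (K κ : ℝ) (γ : ℝ → EuclideanSpace ℝ (Fin n)) : Prop :=
  ∀ r : ℝ, 0 < r → r ≤ 1 → ∀ u v w : ℝ, ‖γ v - γ u‖ ≤ r → ‖γ w - γ u‖ ≤ r →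
    wedgeNorm (γ v - γ u) (γ w - γ u) ≤ K * r ^ κ * r ^ 2

/-- The exponent `κ` for which an energy bound yields `UniformlyFlat K κ`; it comes from the
scaling `W ^ (q + 3) ≲ r ^ (3 * p + 3)` of a parallelogram area `W` at scale `r`. -/
def flatnessExponent (p q : ℝ) : ℝ := (3 * p + 3) / (q + 3) - 2

lemma flatnessExponent_pos (hq : 0 ≤ q) (hp : 2 / 3 * q + 1 < p) : 0 < flatnessExponent p q := by
  rw [flatnessExponent, sub_pos, lt_div_iff₀ (by positivity)]
  linarith

/-- The constant `K` for which the energy bound `M` yields `UniformlyFlat K κ`. -/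
def flatnessConst (p q M : ℝ) : ℝ := (12 ^ 3 * 2 ^ q * 16 ^ p * M) ^ (q + 3)⁻¹

lemma uniformlyFlat_of_menger_le (hp : 0 ≤ p) (hq : 0 ≤ q) {M : NNReal}
    {γ γ' : ℝ → EuclideanSpace ℝ (Fin n)} (hγ : LipschitzWith 1 γ)
    (hper : Function.Periodic γ 1) (hγ' : ∀ u, ‖γ' u‖ = 1) (hE : menger p q γ γ' ≤ M) :
    UniformlyFlat (flatnessConst p q M) (flatnessExponent p q) γ := by
  intro r hr hr₁ u v w hv hw
  have hq₃ : 0 < q + 3 := by positivity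
  have hroot := (Real.le_rpow_inv_iff_of_pos (wedgeNorm_nonneg _ _) (by positivity) hq₃).mpr
    (wedgeNorm_rpow_le_of_menger_le hp hq hγ hper hγ' hE hr hr₁ hv hw)
  have hscale : r ^ flatnessExponent p q * r ^ 2 = (r ^ (3 * p + 3)) ^ (q + 3)⁻¹ := by
    rw [← Real.rpow_mul hr.le, ← Real.rpow_add_natCast hr.ne', flatnessExponent, Nat.cast_ofNat,
      sub_add_cancel, div_eq_mul_inv]
  rwa [Real.mul_rpow (by positivity) (by positivity), ← hscale, ← mul_assoc] at hroot

end Energy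

section Chord

variable {E : Type*} [NormedAddCommGroup E] {γ : ℝ → E}

lemma norm_sub_le_sub_of_lipschitzWith (hγ : LipschitzWith 1 γ) {u v : ℝ} (huv : u ≤ v) :
    ‖γ v - γ u‖ ≤ v - u := by
  simpa only [NNReal.coe_one, one_mul, Real.norm_of_nonneg (sub_nonneg.mpr huv)] using
    hγ.norm_sub_le v u

/-- The chord-arc inequality with constant `c` at the single scale `h`: every chord of `γ` over a
parameter interval of length `h` has length at least `c * h`. -/
def ChordArcBound (γ : ℝ → E) (c h : ℝ) : Prop :=
  ∀ u, c * h ≤ ‖γ (u + h) - γ u‖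

lemma ChordArcBound.le_norm_sub {c u v : ℝ} (hγ : ChordArcBound γ c (v - u)) :
    c * (v - u) ≤ ‖γ v - γ u‖ := by
  simpa only [add_sub_cancel] using hγ u

lemma ChordArcBound.mono {c c' h : ℝ} (hγ : ChordArcBound γ c' h) (hh : 0 ≤ h) (hc : c ≤ c') :
    ChordArcBound γ c h :=
  fun u => (mul_le_mul_of_nonneg_right hc hh).trans (hγ u)

lemma exists_chordArcBound [NormedSpace ℝ E] (hγ : Differentiable ℝ γ)
    (hγ' : UniformContinuous (deriv γ)) (hunit : ∀ u, ‖deriv γ u‖ = 1) {c : ℝ} (hc : c < 1) :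
    ∃ h₀ > 0, ∀ h, 0 < h → h ≤ h₀ → ChordArcBound γ c h := by
  obtain ⟨h₀, hh₀, hosc⟩ := Metric.uniformContinuous_iff_le.mp hγ' (1 - c) (sub_pos.mpr hc)
  refine ⟨h₀, hh₀, fun h hh hh_le u => ?_⟩
  have hderiv : ∀ t ∈ Icc u (u + h), HasDerivWithinAt (fun s => γ s - s • deriv γ u)
      (deriv γ t - deriv γ u) (Icc u (u + h)) t := fun t _ => by
    simpa only [one_smul] using
      ((hγ t).hasDerivAt.fun_sub ((hasDerivAt_id' t).smul_const (deriv γ u))).hasDerivWithinAt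
  have hbound : ∀ t ∈ Icc u (u + h), ‖deriv γ t - deriv γ u‖ ≤ 1 - c := fun t ht => by
    rw [← dist_eq_norm]
    refine hosc ?_
    rw [Real.dist_eq, abs_of_nonneg (by linarith [ht.1])]
    linarith [ht.2]
  have htangent : ‖(γ (u + h) - γ u) - h • deriv γ u‖ ≤ (1 - c) * h := by
    have hmvt := Convex.norm_image_sub_le_of_norm_hasDerivWithin_le hderiv hbound
      (convex_Icc _ _) (left_mem_Icc.mpr (by linarith)) (right_mem_Icc.mpr (by linarith))
    rw [add_sub_cancel_left, Real.norm_of_nonneg hh.le] at hmvt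
    convert hmvt using 2
    module
  have hspeed : ‖h • deriv γ u‖ = h := by
    rw [norm_smul, hunit, mul_one, Real.norm_of_nonneg hh.le]
  linarith [norm_le_norm_add_norm_sub (γ (u + h) - γ u) (h • deriv γ u)]

end Chord

section LocalEstimate

lemma scale_induction {P : ℝ → Prop} {θ h₀ ρ : ℝ} (hθ₀ : 0 ≤ θ) (hθ : θ < 1) (hh₀ : 0 < h₀)
    (base : ∀ h, 0 < h → h ≤ h₀ → P h)
    (step : ∀ h, 0 < h → h ≤ ρ → (∀ k, 0 < k → k ≤ θ * h → P k) → P h) :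
    ∀ h, 0 < h → h ≤ ρ → P h := by
  have iterate (j : ℕ) : ∀ h, 0 < h → h ≤ ρ → θ ^ j * h ≤ h₀ → P h := by
    induction j with
    | zero => exact fun h hh _ hj => base h hh (by rwa [pow_zero, one_mul] at hj)
    | succ j ih =>
      intro h hh hhρ hj
      refine step h hh hhρ fun k hk hkh => ih k hk ?_ ?_
      · linarith [mul_le_of_le_one_left hh.le hθ.le]
      · calc θ ^ j * k ≤ θ ^ j * (θ * h) := by gcongr
          _ = θ ^ (j + 1) * h := by ring
          _ ≤ h₀ := hj
  intro h hh hhρ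
  obtain ⟨j, hj⟩ := exists_pow_lt_of_lt_one (div_pos hh₀ hh) hθ
  exact iterate j h hh hhρ ((lt_div_iff₀ hh).mp hj).le

/-- The total relative loss of length, in units of `h ^ (2 * κ)`, under repeated bisection of a
chord of parameter length `h`: the sum of the geometric series of the losses
`12 * K ^ 2 * (h / 2 ^ j) ^ (2 * κ)` of the single bisections. -/
def bisectionLoss (K κ : ℝ) : ℝ := 12 * K ^ 2 / (1 - (1 / 2) ^ (2 * κ))

lemma bisectionLoss_nonneg (K : ℝ) {κ : ℝ} (hκ : 0 < κ) : 0 ≤ bisectionLoss K κ := by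
  have hratio : (1 / 2 : ℝ) ^ (2 * κ) ≤ 1 :=
    Real.rpow_le_one (by norm_num) (by norm_num) (by positivity)
  exact div_nonneg (by positivity) (sub_nonneg.mpr hratio)

lemma bisectionLoss_mul_half_rpow_add (K : ℝ) {κ h : ℝ} (hκ : 0 < κ) (hh : 0 ≤ h) :
    bisectionLoss K κ * (h / 2) ^ (2 * κ) + 12 * K ^ 2 * h ^ (2 * κ) =
      bisectionLoss K κ * h ^ (2 * κ) := by
  have hratio : (1 / 2 : ℝ) ^ (2 * κ) < 1 :=
    Real.rpow_lt_one (by norm_num) (by norm_num) (by positivity)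
  have hden : 1 - (1 / 2 : ℝ) ^ (2 * κ) ≠ 0 := (sub_pos.mpr hratio).ne'
  have hhalf : (h / 2) ^ (2 * κ) = (1 / 2) ^ (2 * κ) * h ^ (2 * κ) := by
    rw [← Real.mul_rpow (by norm_num) hh, one_div_mul_eq_div]
  rw [hhalf, bisectionLoss]
  field_simp
  ring

variable {n : ℕ} {γ : ℝ → EuclideanSpace ℝ (Fin n)} {K κ h : ℝ}

lemma UniformlyFlat.wedgeNorm_sq_le (hflat : UniformlyFlat K κ γ) (hh : 0 < h) (hh₁ : h ≤ 1)
    {u v w : ℝ} (hv : ‖γ v - γ u‖ ≤ h) (hw : ‖γ w - γ u‖ ≤ h) :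
    wedgeNorm (γ v - γ u) (γ w - γ u) ^ 2 ≤ K ^ 2 * h ^ (2 * κ) * h * h ^ 3 := by
  calc wedgeNorm (γ v - γ u) (γ w - γ u) ^ 2
      ≤ (K * h ^ κ * h ^ 2) ^ 2 :=
        pow_le_pow_left₀ (wedgeNorm_nonneg _ _) (hflat h hh hh₁ u v w hv hw) 2
    _ = K ^ 2 * h ^ (2 * κ) * h * h ^ 3 := by
        rw [mul_comm 2 κ, Real.rpow_mul hh.le, Real.rpow_ofNat]
        ring

/-- The chord-arc inequality is assumed up to scale `19 / 20 * h` rather than `h / 2`, as it must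
exclude that the two halves of the chord fold back onto each other. -/
lemma UniformlyFlat.norm_add_norm_sub_norm_le (hflat : UniformlyFlat K κ γ)
    (hγ : LipschitzWith 1 γ) (hh : 0 < h) (hh₁ : h ≤ 1)
    (hsmall : ∀ k, 0 < k → k ≤ 19 / 20 * h → ChordArcBound γ (7 / 8) k)
    {u m v : ℝ} (hum : m - u = h / 2) (hmv : v - m = h / 2) :
    ‖γ m - γ u‖ + ‖γ v - γ m‖ - ‖γ v - γ u‖ ≤ 12 * K ^ 2 * h ^ (2 * κ) * h := by
  have hhalf : ChordArcBound γ (7 / 8) (h / 2) := hsmall _ (by linarith) (by linarith)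
  have hum_ge : 7 / 16 * h ≤ ‖γ m - γ u‖ := by
    linarith [(hum ▸ hhalf : ChordArcBound γ (7 / 8) (m - u)).le_norm_sub]
  have hmv_ge : 7 / 16 * h ≤ ‖γ v - γ m‖ := by
    linarith [(hmv ▸ hhalf : ChordArcBound γ (7 / 8) (v - m)).le_norm_sub]
  have hum_le : ‖γ m - γ u‖ ≤ h / 2 :=
    (norm_sub_le_sub_of_lipschitzWith hγ (by linarith)).trans_eq hum
  have hmv_le : ‖γ v - γ m‖ ≤ h / 2 :=
    (norm_sub_le_sub_of_lipschitzWith hγ (by linarith)).trans_eq hmv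
  have huv : γ m - γ u + (γ v - γ m) = γ v - γ u := by abel
  have huv_ge : 3 / 4 * h ≤ ‖γ v - γ u‖ := by
    have hlong := hsmall (19 / 20 * h) (by linarith) le_rfl u
    have hrest := norm_sub_le_sub_of_lipschitzWith hγ (by linarith : u + 19 / 20 * h ≤ v)
    have htri := norm_sub_le_norm_sub_add_norm_sub (γ (u + 19 / 20 * h)) (γ v) (γ u)
    rw [norm_sub_rev _ (γ v)] at htri
    linarith
  have hinner : 0 ≤ inner ℝ (γ m - γ u) (γ v - γ m) :=
    real_inner_nonneg_of_le_norm_add hh.le hum_le hmv_le (by rwa [huv])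
  have harea : wedgeNorm (γ m - γ u) (γ v - γ m) ^ 2 ≤ K ^ 2 * h ^ (2 * κ) * h * h ^ 3 := by
    rw [← neg_sub, wedgeNorm_neg_left]
    refine hflat.wedgeNorm_sq_le hh hh₁ ?_ (by linarith)
    rw [norm_sub_rev]
    linarith
  have hdefect := triangle_defect_mul_cube_le hh.le hum_ge hmv_ge hinner
  rw [huv] at hdefect
  exact le_of_mul_le_mul_right (by linarith) (pow_pos hh 3)

lemma UniformlyFlat.chordArcBound_of_half (hflat : UniformlyFlat K κ γ) (hγ : LipschitzWith 1 γ)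
    (hh : 0 < h) (hh₁ : h ≤ 1)
    (hsmall : ∀ k, 0 < k → k ≤ 19 / 20 * h → ChordArcBound γ (7 / 8) k)
    {c : ℝ} (hc : ChordArcBound γ c (h / 2)) :
    ChordArcBound γ (c - 12 * K ^ 2 * h ^ (2 * κ)) h := by
  intro u
  have hdefect := hflat.norm_add_norm_sub_norm_le hγ hh hh₁ hsmall (add_sub_cancel_left u (h / 2))
    (add_sub_cancel_left (u + h / 2) (h / 2))
  have hleft := hc u
  have hright := hc (u + h / 2)
  rw [add_assoc, add_halves] at hdefect hright
  linarith

/-- A scale `ρ` below which flatness with constants `K` and `κ` forbids close distant strands, and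
the accumulated loss of length under bisection of chords is small. -/
structure IsFlatScale (K κ ρ : ℝ) : Prop where
  pos : 0 < ρ
  le_half : ρ ≤ 1 / 2
  flat_le : ∀ r ∈ Icc 0 ρ, K * r ^ κ ≤ 1 / 2
  loss_le : ∀ r ∈ Icc 0 ρ, bisectionLoss K κ * r ^ (2 * κ) ≤ 1 / 16

lemma eventually_mul_rpow_le (B : ℝ) {ν ε : ℝ} (hν : 0 < ν) (hε : 0 < ε) :
    ∀ᶠ r : ℝ in 𝓝 0, B * r ^ ν ≤ ε := by
  have hlim : Tendsto (fun r : ℝ => B * r ^ ν) (𝓝 0) (𝓝 0) :=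
    ((Real.continuous_rpow_const hν.le).const_mul B).tendsto' 0 0 (by
      rw [Real.zero_rpow hν.ne', mul_zero])
  exact hlim.eventually_le_const hε

lemma exists_isFlatScale (K : ℝ) (hκ : 0 < κ) : ∃ ρ, IsFlatScale K κ ρ := by
  have hsmall : ∀ᶠ r : ℝ in 𝓝 0,
      r ≤ 1 / 2 ∧ K * r ^ κ ≤ 1 / 2 ∧ bisectionLoss K κ * r ^ (2 * κ) ≤ 1 / 16 :=
    (eventually_le_nhds one_half_pos).and ((eventually_mul_rpow_le K hκ one_half_pos).and
      (eventually_mul_rpow_le _ (by positivity) (by norm_num)))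
  obtain ⟨ρ, hρ, hball⟩ := Metric.nhds_basis_closedBall.eventually_iff.mp hsmall
  have hmem : ∀ r ∈ Icc 0 ρ, r ∈ Metric.closedBall 0 ρ := fun r hr => by
    rw [mem_closedBall_zero_iff, Real.norm_of_nonneg hr.1]
    exact hr.2
  exact ⟨ρ, hρ, (hball (hmem ρ ⟨hρ.le, le_rfl⟩)).1, fun r hr => (hball (hmem r hr)).2.1,
    fun r hr => (hball (hmem r hr)).2.2⟩

lemma UniformlyFlat.chordArcBound_of_le {ρ : ℝ} (hflat : UniformlyFlat K κ γ) (hκ : 0 < κ)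
    (hρ : IsFlatScale K κ ρ) (hγ : LipschitzWith 1 γ)
    (hstraight : ∃ h₀ > 0, ∀ h, 0 < h → h ≤ h₀ → ChordArcBound γ (15 / 16) h) :
    ∀ h, 0 < h → h ≤ ρ → ChordArcBound γ (7 / 8) h := by
  obtain ⟨h₀, hh₀, hbase⟩ := hstraight
  have hweaken : ∀ h, 0 < h → h ≤ ρ →
      ChordArcBound γ (15 / 16 - bisectionLoss K κ * h ^ (2 * κ)) h → ChordArcBound γ (7 / 8) h :=
    fun h hh hhρ hγh => hγh.mono hh.le (by linarith [hρ.loss_le h ⟨hh.le, hhρ⟩])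
  suffices ∀ h, 0 < h → h ≤ ρ →
      ChordArcBound γ (15 / 16 - bisectionLoss K κ * h ^ (2 * κ)) h from
    fun h hh hhρ => hweaken h hh hhρ (this h hh hhρ)
  refine scale_induction (θ := 19 / 20) (by norm_num) (by norm_num) hh₀
    (fun h hh hhh₀ => (hbase h hh hhh₀).mono hh.le ?_) (fun h hh hhρ ih => ?_)
  · exact sub_le_self _ (mul_nonneg (bisectionLoss_nonneg K hκ) (by positivity))
  · rw [← bisectionLoss_mul_half_rpow_add K hκ hh.le, ← sub_sub]
    exact hflat.chordArcBound_of_half hγ hh (by linarith [hρ.le_half])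
      (fun k hk hkh => hweaken k hk (by linarith) (ih k hk hkh))
      (ih (h / 2) (by linarith) (by linarith))

end LocalEstimate

section GlobalEstimate

lemma exists_closest_separated {α : Type*} [PseudoMetricSpace α] {γ : ℝ → α} (hγ : Continuous γ)
    (hper : Function.Periodic γ 1) {ρ : ℝ} (hρ : ρ ≤ 1 / 2) :
    ∃ s t, t - s ∈ Icc ρ (1 - ρ) ∧
      ∀ x y, y - x ∈ Icc ρ (1 - ρ) → dist (γ s) (γ t) ≤ dist (γ x) (γ y) := by
  obtain ⟨⟨s, k⟩, hsk, hmin⟩ := (isCompact_Icc.prod isCompact_Icc :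
    IsCompact (Icc (0 : ℝ) 1 ×ˢ Icc ρ (1 - ρ))).exists_isMinOn
      (f := fun z => dist (γ z.1) (γ (z.1 + z.2)))
      ((nonempty_Icc.mpr zero_le_one).prod (nonempty_Icc.mpr (by linarith))) (by fun_prop)
  refine ⟨s, s + k, by simpa only [add_sub_cancel_left] using hsk.2, fun x y hxy => ?_⟩
  have hfract : dist (γ s) (γ (s + k)) ≤ dist (γ (Int.fract x)) (γ (Int.fract x + (y - x))) :=
    hmin (a := (Int.fract x, y - x)) ⟨⟨Int.fract_nonneg x, (Int.fract_lt_one x).le⟩, hxy⟩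
  have hy : Int.fract x + (y - x) = y - ⌊x⌋ := by
    rw [Int.fract]
    ring
  rwa [hy, Int.fract, periodic_map_sub_intCast hper, periodic_map_sub_intCast hper] at hfract

lemma le_norm_sub_of_mem_Icc {E : Type*} [NormedAddCommGroup E] {γ : ℝ → E} {ρ d : ℝ}
    (hper : Function.Periodic γ 1) (hloc : ∀ h, 0 < h → h ≤ ρ → ChordArcBound γ (7 / 8) h)
    (hρ : 0 < ρ) (hd : d ≤ ρ / 2) (hsep : ∀ x y, y - x ∈ Icc ρ (1 - ρ) → d ≤ ‖γ y - γ x‖)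
    {x y : ℝ} (hxy : y - x ∈ Icc (3 / 4 * ρ) (1 - 3 / 4 * ρ)) : d ≤ ‖γ y - γ x‖ := by
  rcases le_total ρ (y - x) with h | h
  · rcases le_total (y - x) (1 - ρ) with h' | h'
    · exact hsep x y ⟨h, h'⟩
    · have hchord := (hloc (x + 1 - y) (by linarith [hxy.2]) (by linarith)).le_norm_sub
      rw [hper, norm_sub_rev] at hchord
      linarith [hxy.2]
  · have hchord := (hloc (y - x) (by linarith [hxy.1]) h).le_norm_sub
    linarith [hxy.1]

lemma InjCircle.ne_of_mem_Ioo {n : ℕ} {γ : ℝ → EuclideanSpace ℝ (Fin n)} (hinj : InjCircle γ)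
    {s t : ℝ} (hst : t - s ∈ Ioo 0 1) : γ s ≠ γ t := by
  intro heq
  obtain ⟨k, rfl⟩ := hinj s t heq
  rw [add_sub_cancel_left] at hst
  have hk₀ : 0 < k := by exact_mod_cast hst.1
  have hk₁ : k < 1 := by exact_mod_cast hst.2
  omega

variable {n : ℕ} {γ : ℝ → EuclideanSpace ℝ (Fin n)} {K κ ρ : ℝ}

/-- Around a closest pair of distant strands, the points at parameter distance `d` before and after
`γ s` form with `γ s` and `γ t` two triangles, one of which is fat. -/
lemma UniformlyFlat.not_isolated_strand (hflat : UniformlyFlat K κ γ) (hρ : IsFlatScale K κ ρ)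
    (hγ : LipschitzWith 1 γ) (hloc : ∀ h, 0 < h → h ≤ ρ → ChordArcBound γ (7 / 8) h)
    {s t d : ℝ} (hd : 0 < d) (hdρ : d ≤ ρ / 2) (hst : ‖γ t - γ s‖ = d)
    (hafter : d ≤ ‖γ (s + d) - γ t‖) (hbefore : d ≤ ‖γ (s - d) - γ t‖) : False := by
  have hchord : ∀ {x y}, y - x = d → ‖γ y - γ x‖ ∈ Icc (7 / 8 * d) d := fun {x y} hxy => by
    have hle := norm_sub_le_sub_of_lipschitzWith hγ (by linarith : x ≤ y)
    have hge := (hloc (y - x) (by linarith) (by linarith)).le_norm_sub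
    rw [hxy] at hle hge
    exact ⟨hge, hle⟩
  have hs_after : ‖γ (s + d) - γ s‖ ∈ Icc (7 / 8 * d) d := hchord (by ring)
  have hs_before : ‖γ (s - d) - γ s‖ ∈ Icc (7 / 8 * d) d := by
    rw [norm_sub_rev]
    exact hchord (by ring)
  have hspread : 7 / 4 * d ≤ ‖γ (s + d) - γ (s - d)‖ := by
    linarith [(hloc (s + d - (s - d)) (by linarith) (by linarith)).le_norm_sub]
  have hthin (x : ℝ) (hx : ‖γ x - γ s‖ ≤ d) :
      wedgeNorm (γ x - γ s) (γ t - γ s) ≤ d ^ 2 / 2 := by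
    have hgain := hρ.flat_le d ⟨hd.le, by linarith [hρ.pos]⟩
    calc wedgeNorm (γ x - γ s) (γ t - γ s) ≤ K * d ^ κ * d ^ 2 :=
          hflat d hd (by linarith [hρ.le_half]) s x t hx hst.le
      _ ≤ 1 / 2 * d ^ 2 := by gcongr
      _ = d ^ 2 / 2 := by ring
  rcases sq_div_two_lt_wedgeNorm_or hd hs_after hs_before hst
    (by rwa [sub_sub_sub_cancel_right]) (by rwa [sub_sub_sub_cancel_right])
    (by rwa [sub_sub_sub_cancel_right]) with hfat | hfat
  · exact (hthin _ hs_after.2).not_gt hfat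
  · exact (hthin _ hs_before.2).not_gt hfat

lemma UniformlyFlat.le_norm_sub_of_separated (hflat : UniformlyFlat K κ γ)
    (hρ : IsFlatScale K κ ρ) (hγ : LipschitzWith 1 γ) (hper : Function.Periodic γ 1)
    (hinj : InjCircle γ) (hloc : ∀ h, 0 < h → h ≤ ρ → ChordArcBound γ (7 / 8) h)
    {u v : ℝ} (huv : v - u ∈ Icc ρ (1 - ρ)) : ρ / 4 ≤ ‖γ v - γ u‖ := by
  obtain ⟨s, t, hst, hmin⟩ := exists_closest_separated hγ.continuous hper hρ.le_half
  simp only [dist_eq_norm'] at hmin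
  refine le_trans ?_ (hmin u v huv)
  by_contra! hclose
  have hρ₀ := hρ.pos
  have hd : 0 < ‖γ t - γ s‖ := norm_sub_pos_iff.mpr
    (hinj.ne_of_mem_Ioo ⟨by linarith [hst.1], by linarith [hst.2]⟩).symm
  have hfar : ∀ x, t - x ∈ Icc (3 / 4 * ρ) (1 - 3 / 4 * ρ) → ‖γ t - γ s‖ ≤ ‖γ x - γ t‖ :=
    fun x hx => by
      rw [norm_sub_rev (γ x)]
      exact le_norm_sub_of_mem_Icc hper hloc hρ₀ (by linarith) hmin hx
  exact hflat.not_isolated_strand hρ hγ hloc hd (by linarith) rfl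
    (hfar _ ⟨by linarith [hst.1], by linarith [hst.2]⟩)
    (hfar _ ⟨by linarith [hst.1], by linarith [hst.2]⟩)

lemma circleDist_le_mul_norm_sub {E : Type*} [NormedAddCommGroup E] {γ : ℝ → E}
    (hper : Function.Periodic γ 1) {ρ : ℝ} (hρ : 0 < ρ) (hρ_half : ρ ≤ 1 / 2)
    (hloc : ∀ h, 0 < h → h ≤ ρ → ChordArcBound γ (7 / 8) h)
    (hsep : ∀ {u v}, v - u ∈ Icc ρ (1 - ρ) → ρ / 4 ≤ ‖γ v - γ u‖) (u v : ℝ) :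
    circleDist u v ≤ 4 / ρ * ‖γ u - γ v‖ := by
  obtain ⟨k, huk, hdist, hdist'⟩ := exists_intCast_circleDist_le u v
  rw [← periodic_map_sub_intCast hper u k, div_mul_eq_mul_div, le_div_iff₀ hρ]
  set w := u - k
  have hnorm := norm_nonneg (γ w - γ v)
  rcases huk.1.eq_or_lt with h₀ | h₀
  · nlinarith
  rcases le_total (w - v) ρ with h | h
  · have hchord := (hloc (w - v) h₀ h).le_norm_sub
    nlinarith
  rcases le_total (v + 1 - w) ρ with h' | h'
  · have hchord := (hloc (v + 1 - w) (by linarith [huk.2]) h').le_norm_sub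
    rw [hper, norm_sub_rev] at hchord
    nlinarith
  · have hchord := hsep ⟨h, by linarith⟩
    nlinarith [huk.2]

end GlobalEstimate

lemma lipschitzWith_one_of_norm_deriv_eq_one {E : Type*} [NormedAddCommGroup E] [NormedSpace ℝ E]
    {γ : ℝ → E} (hγ : Differentiable ℝ γ) (hunit : ∀ u, ‖deriv γ u‖ = 1) : LipschitzWith 1 γ :=
  lipschitzWith_of_nnnorm_deriv_le hγ fun u => by
    rw [← NNReal.coe_le_coe, coe_nnnorm, NNReal.coe_one, hunit]

theorem uniform_biLipschitz_general (p q M : ℝ) (hq : 0 ≤ q) (hp : 2 / 3 * q + 1 < p) :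
    ∃ C : ℝ, 0 < C ∧
      ∀ (n : ℕ) (γ : ℝ → EuclideanSpace ℝ (Fin n)),
        ContDiff ℝ 1 γ → Function.Periodic γ 1 → InjCircle γ →
        (∀ u, ‖deriv γ u‖ = 1) →
        menger p q γ (deriv γ) ≤ ENNReal.ofReal M →
        ∀ u v : ℝ, circleDist u v ≤ C * ‖γ u - γ v‖ := by
  have hκ : 0 < flatnessExponent p q := flatnessExponent_pos hq hp
  obtain ⟨ρ, hρ⟩ := exists_isFlatScale (flatnessConst p q M.toNNReal) hκ
  refine ⟨4 / ρ, div_pos four_pos hρ.pos, fun n γ hC1 hper hinj hunit hE => ?_⟩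
  have hdiff : Differentiable ℝ γ := hC1.differentiable one_ne_zero
  have hlip : LipschitzWith 1 γ := lipschitzWith_one_of_norm_deriv_eq_one hdiff hunit
  have hunif : UniformContinuous (deriv γ) :=
    uniformContinuous_of_continuous_of_periodic (hC1.continuous_deriv le_rfl) (periodic_deriv hper)
  have hflat := uniformlyFlat_of_menger_le (by linarith) hq hlip hper hunit hE
  have hloc := hflat.chordArcBound_of_le hκ hρ hlip
    (exists_chordArcBound hdiff hunif hunit (by norm_num))
  exact circleDist_le_mul_norm_sub hper hρ.pos hρ.le_half hloc
    (hflat.le_norm_sub_of_separated hρ hlip hper hinj hloc)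

/-- **Uniform bi-Lipschitz estimate.** In the sub-critical range `q > 1`,
`(2/3)q + 1 < p < q + 2/3`, for every `M < ∞` there is a constant
`C(M,p,q) > 0` such that every injective arc-length parametrized `C¹` curve
with `E_{p,q}(γ) ≤ M` satisfies `d_{ℝ/ℤ}(u,v) ≤ C(M,p,q) |γ(u) - γ(v)|`. -/
theorem uniform_biLipschitz (n : ℕ) (p q M : ℝ)
    (hq : 1 < q) (hp₁ : 2/3 * q + 1 < p) (hp₂ : p < q + 2/3) :
    ∃ C : ℝ, 0 < C ∧
      ∀ γ : ℝ → EuclideanSpace ℝ (Fin n),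
        ContDiff ℝ 1 γ → Function.Periodic γ 1 → InjCircle γ →
        (∀ u, ‖deriv γ u‖ = 1) →
        menger p q γ (deriv γ) ≤ ENNReal.ofReal M →
        ∀ u v : ℝ, circleDist u v ≤ C * ‖γ u - γ v‖ := by
  obtain ⟨C, hC, hbound⟩ := uniform_biLipschitz_general p q M (zero_le_one.trans hq.le) hp₁
  exact ⟨C, hC, hbound n⟩
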